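/- (Deterministic core of the constant-factor partition lemma for the top level.) Let p ∈ [1,2], let u be a stream of length m, and let r, n, t₁, t₂ be integers with 1 ≤ t₁ ≤ r−n ≤ t₂ ≤ r ≤ m. Write W = [r−n, r]. If ℓ_p^{(t₂,r)} ≥ (3/4)·ℓ_p^{(t₁,r)}, then F_p^{W} ≤ F_p^{(t₁,r)} ≤ 2·F_p^{W} and (1/2)·F_p^{W} ≤ F_p^{(t₂,r)} ≤ F_p^{W}. -/

import Mathlib

/-!
The moment `F_p^{(a,r)}` is antitone in the left endpoint `a`, because shrinking the interval
only removes occurrences (`Fmom_anti`). Raising `(3/4) ℓ_p^{(t₁,r)} ≤ ℓ_p^{(t₂,r)}` to the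
`p`-th power gives `(3/4)^p F_p^{(t₁,r)} ≤ F_p^{(t₂,r)}`, and `(3/4)^p ≥ (3/4)^2 = 9/16 ≥ 1/2`
since `p ≤ 2` (`half_Fmom_le`). As `F_p^W` lies between these two moments, all four
inequalities follow.
-/

/-- `freq u a b i` is the number of times universe item `i` occurs among the
stream elements `u a, …, u b` (the frequency vector entry `x^{(a,b)}_i`). -/
def freq (u : ℕ → ℕ) (a b i : ℕ) : ℕ :=
  ((Finset.Icc a b).filter (fun t => u t = i)).card

/-- `Fmom U u p a b = F_p^{(a,b)} = Σ_{i=1}^U (x^{(a,b)}_i)^p`. -/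
noncomputable def Fmom (U : ℕ) (u : ℕ → ℕ) (p : ℝ) (a b : ℕ) : ℝ :=
  ∑ i ∈ Finset.Icc 1 U, (freq u a b i : ℝ) ^ p

/-- `lpnorm U u p a b = ℓ_p^{(a,b)} = (F_p^{(a,b)})^{1/p}`. -/
noncomputable def lpnorm (U : ℕ) (u : ℕ → ℕ) (p : ℝ) (a b : ℕ) : ℝ :=
  (Fmom U u p a b) ^ (1 / p)

theorem Fmom_nonneg (U : ℕ) (u : ℕ → ℕ) (p : ℝ) (a b : ℕ) : 0 ≤ Fmom U u p a b :=
  Finset.sum_nonneg fun _ _ => Real.rpow_nonneg (Nat.cast_nonneg _) _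

theorem Fmom_anti (U : ℕ) (u : ℕ → ℕ) {p : ℝ} (hp : 0 ≤ p) {a a' : ℕ} (b : ℕ) (h : a ≤ a') :
    Fmom U u p a' b ≤ Fmom U u p a b := by
  refine Finset.sum_le_sum fun i _ => Real.rpow_le_rpow (Nat.cast_nonneg _) ?_ hp
  exact Nat.cast_le.mpr (Finset.card_le_card
    (Finset.filter_subset_filter _ (Finset.Icc_subset_Icc_left h)))

theorem lpnorm_rpow (U : ℕ) (u : ℕ → ℕ) {p : ℝ} (hp : p ≠ 0) (a b : ℕ) :
    lpnorm U u p a b ^ p = Fmom U u p a b := by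
  rw [lpnorm, one_div, Real.rpow_inv_rpow (Fmom_nonneg U u p a b) hp]

/-- The ratio `3/4` between norms costs at most a factor `(4/3)^2 < 2` between moments. -/
theorem half_Fmom_le (U : ℕ) (u : ℕ → ℕ) {p : ℝ} (hp1 : 1 ≤ p) (hp2 : p ≤ 2) (a a' b : ℕ)
    (h : (3 / 4 : ℝ) * lpnorm U u p a b ≤ lpnorm U u p a' b) :
    (1 / 2 : ℝ) * Fmom U u p a b ≤ Fmom U u p a' b := by
  have hp0 : p ≠ 0 := by linarith
  have hn : 0 ≤ lpnorm U u p a b := Real.rpow_nonneg (Fmom_nonneg U u p a b) _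
  have hpow : (3 / 4 : ℝ) ^ p * Fmom U u p a b ≤ Fmom U u p a' b := by
    have := Real.rpow_le_rpow (by positivity) h (by linarith : (0 : ℝ) ≤ p)
    rwa [Real.mul_rpow (by norm_num) hn, lpnorm_rpow U u hp0, lpnorm_rpow U u hp0] at this
  have hc : (1 / 2 : ℝ) ≤ (3 / 4 : ℝ) ^ p :=
    calc (1 / 2 : ℝ) ≤ (3 / 4 : ℝ) ^ (2 : ℝ) := by norm_num
      _ ≤ (3 / 4 : ℝ) ^ p :=
        Real.rpow_le_rpow_of_exponent_ge (by norm_num) (by norm_num) hp2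
  exact (mul_le_mul_of_nonneg_right hc (Fmom_nonneg U u p a b)).trans hpow

/-- Deterministic core of the constant-factor partition lemma at the top level:
if `ℓ_p^{(t₂,r)} ≥ (3/4)·ℓ_p^{(t₁,r)}` with `t₁ ≤ r-n ≤ t₂`, then
`F_p^W ≤ F_p^{(t₁,r)} ≤ 2·F_p^W` and `(1/2)·F_p^W ≤ F_p^{(t₂,r)} ≤ F_p^W`,
where `W = [r-n, r]`. -/
theorem top_level_constant_factor_partition
    (m U : ℕ) (u : ℕ → ℕ) (hu : ∀ t ∈ Finset.Icc 1 m, u t ∈ Finset.Icc 1 U)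
    (p : ℝ) (hp1 : 1 ≤ p) (hp2 : p ≤ 2)
    (r n t₁ t₂ : ℕ)
    (ht₁ : 1 ≤ t₁) (ht₁' : t₁ ≤ r - n) (ht₂ : r - n ≤ t₂) (ht₂' : t₂ ≤ r)
    (hrm : r ≤ m)
    (h : (3 / 4 : ℝ) * lpnorm U u p t₁ r ≤ lpnorm U u p t₂ r) :
    (Fmom U u p (r - n) r ≤ Fmom U u p t₁ r ∧
      Fmom U u p t₁ r ≤ 2 * Fmom U u p (r - n) r) ∧
    ((1 / 2 : ℝ) * Fmom U u p (r - n) r ≤ Fmom U u p t₂ r ∧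
      Fmom U u p t₂ r ≤ Fmom U u p (r - n) r) := by
  have hp : 0 ≤ p := by linarith
  have h1 := Fmom_anti U u hp r ht₁'
  have h2 := Fmom_anti U u hp r ht₂
  have h3 := half_Fmom_le U u hp1 hp2 t₁ t₂ r h
  refine ⟨⟨h1, ?_⟩, ?_, h2⟩ <;> linarith
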